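/- arXiv:1803.10846 — 8 statements merged into one kernel-verified Lean document; each statement's English description precedes it below -/
import Mathlib

section
/- Let X ∈ ℝ^{n₁×r}, Y ∈ ℝ^{n₂×r} and W ∈ ℝ^{n₁×n₂} be arbitrary real matrices. Then |‖XYᵀ‖_W² − ‖XYᵀ‖_F²| ≤ ‖W − J‖ · ‖X‖_F · ‖Y‖_F · (max_{1≤i≤n₁} ‖X_i‖₂) · (max_{1≤j≤n₂} ‖Y_j‖₂), where ‖W − J‖ is the spectral norm of W − J. -/
open scoped BigOperators
open Matrix

/-- Squared Frobenius norm of a real matrix. -/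
noncomputable def frobSq {m n : ℕ} (A : Matrix (Fin m) (Fin n) ℝ) : ℝ :=
  ∑ i, ∑ j, (A i j) ^ 2

/-- Frobenius norm of a real matrix. -/
noncomputable def frob {m n : ℕ} (A : Matrix (Fin m) (Fin n) ℝ) : ℝ :=
  Real.sqrt (frobSq A)

/-- Euclidean norm of the `i`-th row of a matrix. -/
noncomputable def rowNorm {m n : ℕ} (A : Matrix (Fin m) (Fin n) ℝ) (i : Fin m) : ℝ :=
  Real.sqrt (∑ j, (A i j) ^ 2)

/-- Spectral (ℓ₂ operator) norm of a real matrix. -/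
noncomputable def specNorm {m n : ℕ} (A : Matrix (Fin m) (Fin n) ℝ) : ℝ :=
  ‖LinearMap.toContinuousLinearMap (Matrix.toEuclideanLin A)‖

/-- Weighted squared norm `‖M‖_W² = ∑ᵢⱼ Wᵢⱼ Mᵢⱼ²`. -/
noncomputable def wNormSq {m n : ℕ} (W A : Matrix (Fin m) (Fin n) ℝ) : ℝ :=
  ∑ i, ∑ j, W i j * (A i j) ^ 2

/-- The all-ones matrix `J`. -/
def Jmat (m n : ℕ) : Matrix (Fin m) (Fin n) ℝ :=
  Matrix.of fun _ _ => (1 : ℝ)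

lemma aux_bilin {m n : ℕ} (D : Matrix (Fin m) (Fin n) ℝ) (a : Fin m → ℝ) (b : Fin n → ℝ) :
    |∑ i, ∑ j, D i j * (a i * b j)| ≤
      specNorm D * (Real.sqrt (∑ i, a i ^ 2) * Real.sqrt (∑ j, b j ^ 2)) := by
  have ha : ‖WithLp.toLp 2 a‖ = Real.sqrt (∑ i, a i ^ 2) := by
    simp [EuclideanSpace.norm_eq]
  have hb : ‖WithLp.toLp 2 b‖ = Real.sqrt (∑ i, b i ^ 2) := by
    simp [EuclideanSpace.norm_eq]
  have h1 : ∑ i, ∑ j, D i j * (a i * b j) =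
      inner ℝ (WithLp.toLp 2 a)
        (LinearMap.toContinuousLinearMap (Matrix.toEuclideanLin D) (WithLp.toLp 2 b)) := by
    simp only [PiLp.inner_apply, LinearMap.coe_toContinuousLinearMap', Matrix.toLpLin_apply,
      Matrix.mulVec, dotProduct, RCLike.inner_apply, conj_trivial, Finset.sum_mul]
    refine Finset.sum_congr rfl fun i _ => Finset.sum_congr rfl fun j _ => by ring
  rw [h1]
  refine (abs_real_inner_le_norm _ _).trans ?_
  have h2 := (LinearMap.toContinuousLinearMap (Matrix.toEuclideanLin D)).le_opNorm (WithLp.toLp 2 b)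
  refine (mul_le_mul_of_nonneg_left h2 (norm_nonneg _)).trans (le_of_eq ?_)
  rw [ha, hb, specNorm]; ring

lemma aux_row {m r : ℕ} (X : Matrix (Fin m) (Fin r) ℝ) :
    Real.sqrt (∑ p : Fin r × Fin r, ∑ i, (X i p.1 * X i p.2) ^ 2) ≤
      frob X * (⨆ i, rowNorm X i) := by
  have hM : ∀ i, rowNorm X i ≤ ⨆ i, rowNorm X i := fun i =>
    le_ciSup (Set.finite_range _).bddAbove i
  have hM0 : 0 ≤ ⨆ i, rowNorm X i := Real.iSup_nonneg fun i => Real.sqrt_nonneg _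
  have hf : 0 ≤ frobSq X := Finset.sum_nonneg fun i _ => Finset.sum_nonneg fun j _ => sq_nonneg _
  apply Real.sqrt_le_iff.mpr
  refine ⟨mul_nonneg (Real.sqrt_nonneg _) hM0, ?_⟩
  rw [mul_pow, frob, Real.sq_sqrt hf, frobSq, Finset.sum_comm, Finset.sum_mul]
  refine Finset.sum_le_sum fun i _ => ?_
  have h0 : 0 ≤ ∑ j, X i j ^ 2 := Finset.sum_nonneg fun j _ => sq_nonneg _
  have h1 : ∑ p : Fin r × Fin r, (X i p.1 * X i p.2) ^ 2 = (∑ j, X i j ^ 2) * (∑ j, X i j ^ 2) := by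
    rw [Fintype.sum_prod_type, Finset.sum_mul_sum]
    simp only [mul_pow]
  have h2 : ∑ j, X i j ^ 2 = rowNorm X i ^ 2 := by rw [rowNorm, Real.sq_sqrt h0]
  rw [h1]
  refine mul_le_mul_of_nonneg_left ?_ h0
  rw [h2]
  exact pow_le_pow_left₀ (Real.sqrt_nonneg _) (hM i) 2

/-- For any real matrices `X ∈ ℝ^{n₁×r}`, `Y ∈ ℝ^{n₂×r}`, `W ∈ ℝ^{n₁×n₂}`,
`|‖XYᵀ‖_W² − ‖XYᵀ‖_F²| ≤ ‖W − J‖ ‖X‖_F ‖Y‖_F (maxᵢ ‖Xᵢ‖₂)(maxⱼ ‖Yⱼ‖₂)`. -/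
theorem stmt0 {n₁ n₂ r : ℕ} (hn₁ : 0 < n₁) (hn₂ : 0 < n₂)
    (X : Matrix (Fin n₁) (Fin r) ℝ) (Y : Matrix (Fin n₂) (Fin r) ℝ)
    (W : Matrix (Fin n₁) (Fin n₂) ℝ) :
    |wNormSq W (X * Yᵀ) - frobSq (X * Yᵀ)| ≤
      specNorm (W - Jmat n₁ n₂) * frob X * frob Y *
        (⨆ i, rowNorm X i) * (⨆ j, rowNorm Y j) := by
  set D := W - Jmat n₁ n₂ with hD
  have key : wNormSq W (X * Yᵀ) - frobSq (X * Yᵀ) =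
      ∑ p : Fin r × Fin r, ∑ i, ∑ j, D i j * ((X i p.1 * X i p.2) * (Y j p.1 * Y j p.2)) := by
    rw [wNormSq, frobSq, ← Finset.sum_sub_distrib, Finset.sum_comm]
    refine Finset.sum_congr rfl fun i _ => ?_
    rw [← Finset.sum_sub_distrib, Finset.sum_comm]
    refine Finset.sum_congr rfl fun j _ => ?_
    have : W i j * (X * Yᵀ) i j ^ 2 - (X * Yᵀ) i j ^ 2 = D i j * (X * Yᵀ) i j ^ 2 := by
      simp [hD, Jmat]; ring
    rw [this, ← Finset.mul_sum, Fintype.sum_prod_type, sq, Matrix.mul_apply, Finset.sum_mul_sum]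
    congr 1
    refine Finset.sum_congr rfl fun k _ => Finset.sum_congr rfl fun l _ => ?_
    simp only [Matrix.transpose_apply]; ring
  have hS : 0 ≤ specNorm D := norm_nonneg _
  rw [key]
  calc _ ≤ ∑ p : Fin r × Fin r, |∑ i, ∑ j, D i j * ((X i p.1 * X i p.2) * (Y j p.1 * Y j p.2))| :=
        Finset.abs_sum_le_sum_abs _ _
    _ ≤ ∑ p : Fin r × Fin r, specNorm D * (Real.sqrt (∑ i, (X i p.1 * X i p.2) ^ 2) *
          Real.sqrt (∑ j, (Y j p.1 * Y j p.2) ^ 2)) :=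
        Finset.sum_le_sum fun p _ => aux_bilin D _ _
    _ = specNorm D * ∑ p : Fin r × Fin r, (Real.sqrt (∑ i, (X i p.1 * X i p.2) ^ 2) *
          Real.sqrt (∑ j, (Y j p.1 * Y j p.2) ^ 2)) := by rw [Finset.mul_sum]
    _ ≤ specNorm D * (Real.sqrt (∑ p : Fin r × Fin r, ∑ i, (X i p.1 * X i p.2) ^ 2) *
          Real.sqrt (∑ p : Fin r × Fin r, ∑ j, (Y j p.1 * Y j p.2) ^ 2)) :=
        mul_le_mul_of_nonneg_left (Real.sum_sqrt_mul_sqrt_le _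
          (fun p => Finset.sum_nonneg fun i _ => sq_nonneg _)
          (fun p => Finset.sum_nonneg fun i _ => sq_nonneg _)) hS
    _ ≤ specNorm D * ((frob X * (⨆ i, rowNorm X i)) * (frob Y * (⨆ j, rowNorm Y j))) :=
        mul_le_mul_of_nonneg_left (mul_le_mul (aux_row X) (aux_row Y) (Real.sqrt_nonneg _)
          ((Real.sqrt_nonneg _).trans (aux_row X))) hS
    _ = _ := by ring
end

section
/- Let X ∈ ℝ^{n₁×r}, Y ∈ ℝ^{n₂×r} and W ∈ ℝ^{n₁×n₂} be real matrices. Then Σ_{i,j} W_{i,j} ((XYᵀ)_{i,j})² = tr((X⊙X)ᵀ W (Y⊙Y)), where X⊙X ∈ ℝ^{n₁×r²} is the matrix whose i-th row is X_i ⊗ X_i and Y⊙Y ∈ ℝ^{n₂×r²} is the matrix whose j-th row is Y_j ⊗ Y_j. -/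
open scoped BigOperators
open Matrix

/-- The Khatri–Rao product `X⊙X`: the matrix whose `i`-th row is the Kronecker product
`Xᵢ ⊗ Xᵢ` of the `i`-th row of `X` with itself, indexed by `Fin r × Fin r ≃ Fin r²`. -/
noncomputable def khatriRaoSq {n r : ℕ} (X : Matrix (Fin n) (Fin r) ℝ) :
    Matrix (Fin n) (Fin r × Fin r) ℝ :=
  Matrix.of fun i p => X i p.1 * X i p.2

/-- `∑ᵢⱼ Wᵢⱼ ((XYᵀ)ᵢⱼ)² = tr((X⊙X)ᵀ W (Y⊙Y))`. -/
theorem stmt1 {n₁ n₂ r : ℕ}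
    (X : Matrix (Fin n₁) (Fin r) ℝ) (Y : Matrix (Fin n₂) (Fin r) ℝ)
    (W : Matrix (Fin n₁) (Fin n₂) ℝ) :
    (∑ i, ∑ j, W i j * ((X * Yᵀ) i j) ^ 2) =
      Matrix.trace ((khatriRaoSq X)ᵀ * W * khatriRaoSq Y) := by
  have h : ∀ i j, W i j * ((X * Yᵀ) i j) ^ 2 =
      ∑ p : Fin r × Fin r, khatriRaoSq X i p * W i j * khatriRaoSq Y j p := by
    intro i j
    rw [sq, Matrix.mul_apply, Finset.sum_mul_sum, Finset.mul_sum, Fintype.sum_prod_type]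
    refine Finset.sum_congr rfl fun a _ => ?_
    rw [Finset.mul_sum]
    refine Finset.sum_congr rfl fun b _ => ?_
    simp only [khatriRaoSq, Matrix.of_apply, Matrix.transpose_apply]
    ring
  simp only [h]
  simp only [Matrix.trace, Matrix.diag_apply, Matrix.mul_apply, Finset.sum_mul,
    Matrix.transpose_apply]
  rw [Finset.sum_congr rfl fun i _ => Finset.sum_comm]
  rw [Finset.sum_comm]
  refine Finset.sum_congr rfl fun p _ => ?_
  rw [Finset.sum_comm]
end

section
/- Let v₁, …, v_m ∈ ℝⁿ and let β ≥ 0, ε > 0, ρ > 0. Suppose there exist weights w₁, …, w_m ≥ 0 such that (1−β) I ⪯ Σ_{i=1}^m w_i v_i v_iᵀ ⪯ (1+β) I. Let C₊ and C₋ be any positive semidefinite n×n matrices. Then there exist x₁, …, x_m ≥ 0 such that the matrix X = Σ_{i=1}^m x_i v_i v_iᵀ satisfies X ⪯ ερ I and (C₊ − C₋) • X ≥ ερ · ( (1−β)/(1+β) · tr(C₊) − tr(C₋) ). -/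
open scoped BigOperators
open Matrix

/-- Matrix inner product `A • B = tr(AᵀB) = ∑ᵢⱼ Aᵢⱼ Bᵢⱼ`. -/
noncomputable def matInner {n : ℕ} (A B : Matrix (Fin n) (Fin n) ℝ) : ℝ :=
  ∑ i, ∑ j, A i j * B i j

theorem matInner_nonneg_aux {n : ℕ} {A B : Matrix (Fin n) (Fin n) ℝ} (hA : A.PosSemidef)
    (hB : B.PosSemidef) : 0 ≤ matInner A B := by
  obtain ⟨C, rfl⟩ : ∃ C : Matrix (Fin n) (Fin n) ℝ, B = Cᴴ * C := by
    open scoped MatrixOrder in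
    open scoped Matrix.Norms.L2Operator in
    exact CStarAlgebra.nonneg_iff_eq_star_mul_self.mp hB.nonneg
  have h : matInner A (Cᴴ * C) = ∑ k, star (C k) ⬝ᵥ (A *ᵥ (C k)) := by
    simp only [matInner, Matrix.mul_apply, dotProduct, Matrix.mulVec, Finset.mul_sum,
      Matrix.conjTranspose_apply, Pi.star_apply, star_trivial]
    have e : ∀ i : Fin n, (∑ j, ∑ k, A i j * (C k i * C k j)) =
        ∑ k, ∑ j, C k i * (A i j * C k j) := fun i => by
      rw [Finset.sum_comm]
      exact Finset.sum_congr rfl fun k _ => Finset.sum_congr rfl fun j _ => by ring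
    rw [Finset.sum_congr rfl fun i _ => e i, Finset.sum_comm]
  rw [h]
  exact Finset.sum_nonneg fun k _ => hA.dotProduct_mulVec_nonneg (C k)

theorem matInner_one_aux {n : ℕ} (A : Matrix (Fin n) (Fin n) ℝ) : matInner A 1 = A.trace := by
  simp [matInner, Matrix.one_apply, Matrix.trace]

theorem matInner_sub_right_aux {n : ℕ} (A B C : Matrix (Fin n) (Fin n) ℝ) :
    matInner A (B - C) = matInner A B - matInner A C := by
  simp [matInner, mul_sub]

theorem matInner_sub_left_aux {n : ℕ} (A B C : Matrix (Fin n) (Fin n) ℝ) :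
    matInner (A - B) C = matInner A C - matInner B C := by
  simp [matInner, sub_mul]

theorem matInner_smul_aux {n : ℕ} (c : ℝ) (A B : Matrix (Fin n) (Fin n) ℝ) :
    matInner A (c • B) = c * matInner A B := by
  simp [matInner, Finset.mul_sum, mul_left_comm]

/-- If there exist nonnegative weights `w` with
`(1−β)I ⪯ ∑ᵢ wᵢ vᵢvᵢᵀ ⪯ (1+β)I`, then for any PSD matrices `C₊, C₋` there exist
nonnegative weights `x` such that `X = ∑ᵢ xᵢ vᵢvᵢᵀ` satisfies `X ⪯ ερI` and
`(C₊ − C₋) • X ≥ ερ ((1−β)/(1+β) tr C₊ − tr C₋)`. -/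
theorem stmt4 {n m : ℕ} (v : Fin m → Fin n → ℝ) (β ε ρ : ℝ)
    (hβ : 0 ≤ β) (hε : 0 < ε) (hρ : 0 < ρ)
    (w : Fin m → ℝ) (hw : ∀ i, 0 ≤ w i)
    (hlow : ((∑ i, w i • Matrix.vecMulVec (v i) (v i)) -
      (1 - β) • (1 : Matrix (Fin n) (Fin n) ℝ)).PosSemidef)
    (hup : ((1 + β) • (1 : Matrix (Fin n) (Fin n) ℝ) -
      ∑ i, w i • Matrix.vecMulVec (v i) (v i)).PosSemidef)
    (Cp Cm : Matrix (Fin n) (Fin n) ℝ) (hCp : Cp.PosSemidef) (hCm : Cm.PosSemidef) :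
    ∃ x : Fin m → ℝ, (∀ i, 0 ≤ x i) ∧
      ((ε * ρ) • (1 : Matrix (Fin n) (Fin n) ℝ) -
        ∑ i, x i • Matrix.vecMulVec (v i) (v i)).PosSemidef ∧
      ε * ρ * ((1 - β) / (1 + β) * Cp.trace - Cm.trace) ≤
        matInner (Cp - Cm) (∑ i, x i • Matrix.vecMulVec (v i) (v i)) := by
  have h1 : 0 < 1 + β := by linarith
  have hc : 0 ≤ ε * ρ / (1 + β) := by positivity
  have hX : (∑ i, (ε * ρ / (1 + β) * w i) • Matrix.vecMulVec (v i) (v i)) =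
      (ε * ρ / (1 + β)) • ∑ i, w i • Matrix.vecMulVec (v i) (v i) := by
    rw [Finset.smul_sum]
    exact Finset.sum_congr rfl fun i _ => by rw [smul_smul]
  refine ⟨fun i => ε * ρ / (1 + β) * w i, fun i => mul_nonneg hc (hw i), ?_, ?_⟩
  · simp only [hX]
    have h := hup.smul hc
    rw [smul_sub, smul_smul, div_mul_cancel₀ _ h1.ne'] at h
    exact h
  · simp only [hX]
    have h2 := mul_nonneg hc (matInner_nonneg_aux hCp hlow)
    have h3 := mul_nonneg hc (matInner_nonneg_aux hCm hup)
    rw [matInner_sub_right_aux, matInner_smul_aux, matInner_one_aux] at h2 h3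
    rw [matInner_smul_aux, matInner_sub_left_aux]
    have e2 : ε * ρ * ((1 - β) / (1 + β) * Cp.trace - Cm.trace) =
      ε * ρ / (1 + β) * ((1 - β) * Cp.trace - (1 + β) * Cm.trace) := by
      field_simp
    rw [e2]
    linarith
end

section
/- There exists a universal constant c > 0 such that for every 0 < g < 1 and 0 < ε < 1, there is a real polynomial p of degree at most ⌈c · log(1/(εg))/g⌉ such that |p(x) − x^{-2}| ≤ ε · x^{-2} for all x ∈ (g, 1). -/
open scoped BigOperators

/-- There is a universal constant `c > 0` such that for all
`0 < g < 1` and `0 < ε < 1` there is a real polynomial `p` of degree at most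
`⌈c log(1/(εg))/g⌉` with `|p(x) − x⁻²| ≤ ε x⁻²` for all `x ∈ (g, 1)`. -/
theorem stmt7 :
    ∃ c : ℝ, 0 < c ∧
      ∀ g ε : ℝ, 0 < g → g < 1 → 0 < ε → ε < 1 →
        ∃ p : Polynomial ℝ,
          p.natDegree ≤ ⌈c * Real.log (1 / (ε * g)) / g⌉₊ ∧
          ∀ x ∈ Set.Ioo g 1, |p.eval x - x ^ (-2 : ℤ)| ≤ ε * x ^ (-2 : ℤ) := by
  refine ⟨4, by norm_num, ?_⟩
  intro g ε hg hg1 he he1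
  have key : ∀ x y : ℝ, 0 < x → |x ^ 2 * y - 1| ≤ ε →
      |y - x ^ (-2 : ℤ)| ≤ ε * x ^ (-2 : ℤ) := by
    intro x y hx h
    have hx2 : (0:ℝ) < (x ^ 2)⁻¹ := by positivity
    have e1 : x ^ (-2 : ℤ) = (x ^ 2)⁻¹ := by
      rw [zpow_neg]; norm_cast
    have e2 : y - (x ^ 2)⁻¹ = (x ^ 2 * y - 1) * (x ^ 2)⁻¹ := by
      field_simp
    rw [e1, e2, abs_mul, abs_of_pos hx2]
    exact mul_le_mul_of_nonneg_right h hx2.le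
  by_cases hc : 1 - g ^ 2 ≤ ε
  · refine ⟨1, by simp, ?_⟩
    rintro x ⟨hx1, hx2⟩
    apply key x _ (hg.trans hx1)
    rw [Polynomial.eval_one, abs_le]
    constructor <;> nlinarith
  · push Not at hc
    have hm : 0 < ε * g := by positivity
    have hm1 : ε * g < 1 / 2 := by
      have h1 : ε * g < (1 - g ^ 2) * g := mul_lt_mul_of_pos_right hc hg
      nlinarith [sq_nonneg (g - 1 / 2), mul_nonneg hg.le (sq_nonneg (g - 1 / 2))]
    set L := Real.log (1 / (ε * g)) with hL
    have hLe : L = - Real.log (ε * g) := by rw [hL, one_div, Real.log_inv]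
    have hLpos : 0 < L := by
      rw [hLe]; have := Real.log_neg hm (by linarith); linarith
    set n := ⌈2 * L / g⌉₊ with hn
    have hn1 : 2 * L / g ≤ n := Nat.le_ceil _
    have hn2 : (n : ℝ) < 2 * L / g + 1 := Nat.ceil_lt_add_one (by positivity)
    have hn0 : 0 < n := Nat.ceil_pos.mpr (by positivity)
    have hgn : 2 * L ≤ n * g := by rwa [div_le_iff₀ hg] at hn1
    refine ⟨(∑ i ∈ Finset.range n, (1 - Polynomial.X) ^ i) ^ 2, ?_, ?_⟩
    · have hd : (∑ i ∈ Finset.range n, (1 - Polynomial.X : Polynomial ℝ) ^ i).natDegree ≤ n - 1 := by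
        apply Polynomial.natDegree_sum_le_of_forall_le
        intro i hi
        have hi' := Finset.mem_range.mp hi
        have h1 : (1 - Polynomial.X : Polynomial ℝ).natDegree ≤ 1 := by
          compute_degree
        exact (Polynomial.natDegree_pow_le_of_le i h1).trans (by omega)
      refine (Polynomial.natDegree_pow_le_of_le 2 hd).trans ?_
      have : ((2 * (n - 1) : ℕ) : ℝ) ≤ 4 * L / g := by
        push_cast [Nat.cast_sub (show 1 ≤ n from hn0)]
        have : 4 * L / g = 2 * (2 * L / g) := by ring
        linarith
      exact_mod_cast this.trans (Nat.le_ceil _)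
    · rintro x ⟨hx1, hx2⟩
      have hx0 := hg.trans hx1
      apply key x _ hx0
      have hgeo : x * ∑ i ∈ Finset.range n, (1 - x) ^ i = 1 - (1 - x) ^ n := by
        have := mul_neg_geom_sum (1 - x) n
        simpa using this
      have hu0 : 0 ≤ (1 - x) ^ n := pow_nonneg (by linarith) n
      have hu1 : (1 - x) ^ n ≤ 1 := pow_le_one₀ (by linarith) (by linarith)
      have hu : (1 - x) ^ n ≤ ε / 2 := by
        calc (1 - x) ^ n ≤ (Real.exp (-g)) ^ n := by
              apply pow_le_pow_left₀ (by linarith)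
              have := Real.add_one_le_exp (-g)
              linarith
          _ = Real.exp (-(n * g)) := by rw [← Real.exp_nat_mul]; ring_nf
          _ ≤ Real.exp (-(2 * L)) := by apply Real.exp_le_exp.mpr; linarith
          _ = (ε * g) ^ 2 := by
              rw [hLe, show -(2 * -Real.log (ε * g)) = Real.log (ε * g) + Real.log (ε * g) by ring,
                Real.exp_add, Real.exp_log hm]; ring
          _ ≤ ε / 2 := by nlinarith
      have e : x ^ 2 * Polynomial.eval x ((∑ i ∈ Finset.range n, (1 - Polynomial.X) ^ i) ^ 2)
          = (1 - (1 - x) ^ n) ^ 2 := by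
        rw [← hgeo]
        simp [Polynomial.eval_finset_sum, mul_pow]
      rw [e, abs_le]
      constructor <;> nlinarith
end

section
/- There exists a universal constant c > 0 such that for every 0 < g < 1 and 0 < ε < 1, there is a real polynomial q of degree at most ⌈c · log(1/(εg))/g²⌉ such that |q(x) − exp(1/(2x))·x^{-1}| ≤ ε · exp(1/(2x))·x^{-1} for all x ∈ (g, 1). -/
open scoped BigOperators

lemma aux_tail (k N : ℕ) (t s : ℝ) (ht : 0 < t) (hts : t < s) (hs : s < 1) :
    (∑ n ∈ Finset.range N, ((n + k).choose k : ℝ) * t ^ n) ≤ 1 / (1 - t) ^ (k + 1) ∧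
    1 / (1 - t) ^ (k + 1) - (∑ n ∈ Finset.range N, ((n + k).choose k : ℝ) * t ^ n)
      ≤ (t / s) ^ N * (1 / (1 - s) ^ (k + 1)) := by
  have hs0 : 0 < s := ht.trans hts
  have h1 : HasSum (fun n => ((n + k).choose k : ℝ) * t ^ n) (1 / (1 - t) ^ (k + 1)) :=
    hasSum_choose_mul_geometric_of_norm_lt_one k
      (by rw [Real.norm_eq_abs, abs_of_pos ht]; linarith)
  have h2 : HasSum (fun n => ((n + k).choose k : ℝ) * s ^ n) (1 / (1 - s) ^ (k + 1)) :=
    hasSum_choose_mul_geometric_of_norm_lt_one k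
      (by rw [Real.norm_eq_abs, abs_of_pos hs0]; linarith)
  refine ⟨sum_le_hasSum _ (fun n _ => by positivity) h1, ?_⟩
  have h3 := (hasSum_nat_add_iff' N).2 h1
  have h4 := (hasSum_nat_add_iff' N).2 h2
  have h5 := h4.mul_left ((t / s) ^ N)
  have h6 := hasSum_le (fun n => ?_) h3 h5
  · refine h6.trans ?_
    apply mul_le_mul_of_nonneg_left _ (by positivity)
    have : 0 ≤ ∑ n ∈ Finset.range N, ((n + k).choose k : ℝ) * s ^ n :=
      Finset.sum_nonneg (fun n _ => by positivity)
    linarith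
  · have e : (t / s) ^ N * (((n + N + k).choose k : ℝ) * s ^ (n + N))
        = ((n + N + k).choose k : ℝ) * (s ^ n * t ^ N) := by
      rw [div_pow, pow_add]; field_simp
    rw [e, pow_add]
    gcongr

lemma aux_exp (x : ℝ) (_hx : 0 < x) :
    HasSum (fun k : ℕ => (1 / (2 ^ k * (k.factorial : ℝ))) * (1 / x ^ (k + 1)))
      (Real.exp (1 / (2 * x)) * x⁻¹) := by
  have h : HasSum (fun k : ℕ => (1 / (2 * x)) ^ k / (k.factorial : ℝ)) (Real.exp (1 / (2 * x))) := by
    rw [Real.exp_eq_exp_ℝ]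
    exact NormedSpace.expSeries_div_hasSum_exp _
  have h2 := h.mul_right x⁻¹
  have e : (fun k : ℕ => (1 / (2 ^ k * (k.factorial : ℝ))) * (1 / x ^ (k + 1)))
      = fun k : ℕ => (1 / (2 * x)) ^ k / (k.factorial : ℝ) * x⁻¹ := by
    funext k
    rw [div_pow, mul_pow, pow_succ, one_pow]
    field_simp
  rw [e]
  exact h2

noncomputable def auxA (n : ℕ) : ℝ :=
  ∑' k : ℕ, (1 / (2 ^ k * (k.factorial : ℝ))) * ((n + k).choose k : ℝ)

lemma auxA_hasSum (n : ℕ) :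
    HasSum (fun k : ℕ => (1 / (2 ^ k * (k.factorial : ℝ))) * ((n + k).choose k : ℝ)) (auxA n) := by
  apply Summable.hasSum
  refine Summable.of_nonneg_of_le (fun k => by positivity) (fun k => ?_)
    ((Real.summable_pow_div_factorial 1).mul_left ((2 : ℝ) ^ n))
  have h : ((n + k).choose k : ℝ) ≤ 2 ^ (n + k) := by
    exact_mod_cast Nat.choose_le_two_pow _ _
  calc _ ≤ (1 / (2 ^ k * (k.factorial : ℝ))) * 2 ^ (n + k) := by gcongr
    _ = _ := by rw [pow_add, one_pow]; field_simp

lemma aux_main (N : ℕ) (t s : ℝ) (ht : 0 < t) (hts : t < s) (hs : s < 1) :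
    (∑ n ∈ Finset.range N, auxA n * t ^ n) ≤ Real.exp (1 / (2 * (1 - t))) * (1 - t)⁻¹ ∧
    Real.exp (1 / (2 * (1 - t))) * (1 - t)⁻¹ - (∑ n ∈ Finset.range N, auxA n * t ^ n)
      ≤ (t / s) ^ N * (Real.exp (1 / (2 * (1 - s))) * (1 - s)⁻¹) := by
  have hA : HasSum (fun k : ℕ => ∑ n ∈ Finset.range N,
      (1 / (2 ^ k * (k.factorial : ℝ))) * ((n + k).choose k : ℝ) * t ^ n)
      (∑ n ∈ Finset.range N, auxA n * t ^ n) :=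
    hasSum_sum (fun n _ => (auxA_hasSum n).mul_right _)
  have hA' : ∀ k : ℕ, (∑ n ∈ Finset.range N,
      (1 / (2 ^ k * (k.factorial : ℝ))) * ((n + k).choose k : ℝ) * t ^ n)
      = (1 / (2 ^ k * (k.factorial : ℝ))) *
        ∑ n ∈ Finset.range N, ((n + k).choose k : ℝ) * t ^ n := by
    intro k; rw [Finset.mul_sum]; exact Finset.sum_congr rfl (fun n _ => by ring)
  simp only [hA'] at hA
  have hT := aux_exp (1 - t) (by linarith)
  have hS := aux_exp (1 - s) (by linarith)
  constructor
  · refine hasSum_le (fun k => ?_) hA hT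
    exact mul_le_mul_of_nonneg_left (aux_tail k N t s ht hts hs).1 (by positivity)
  · refine hasSum_le (fun k => ?_) (hT.sub hA) (hS.mul_left _)
    rw [← mul_sub, mul_left_comm]
    exact mul_le_mul_of_nonneg_left (aux_tail k N t s ht hts hs).2 (by positivity)

lemma aux_ratio (N : ℕ) (g ε x : ℝ) (hg : 0 < g) (hx : g < x) (hx1 : x < 1) (hε : 0 < ε)
    (hN : Real.log (1 / ε) + 6 / 5 ≤ N * g ^ 2 / 2) :
    ((1 - x) / (1 - x + x ^ 2 / 2)) ^ N *
      (Real.exp (1 / (2 * (x - x ^ 2 / 2))) * (x - x ^ 2 / 2)⁻¹)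
      ≤ ε * (Real.exp (1 / (2 * x)) * x⁻¹) := by
  have hx0 : 0 < x := hg.trans hx
  have hd : 0 < x - x ^ 2 / 2 := by nlinarith
  have hs : 0 < 1 - x + x ^ 2 / 2 := by nlinarith
  have h1 : (1 - x) / (1 - x + x ^ 2 / 2) ≤ Real.exp (-(g ^ 2 / 2)) := by
    have : (1 - x) / (1 - x + x ^ 2 / 2) ≤ 1 - g ^ 2 / 2 := by
      rw [div_le_iff₀ hs]
      have h2 : g ^ 2 ≤ x ^ 2 := by gcongr
      have h3 : 1 - x + x ^ 2 / 2 ≤ 1 := by nlinarith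
      nlinarith [mul_nonneg (sq_nonneg g) (sub_nonneg.2 h3)]
    linarith [Real.add_one_le_exp (-(g ^ 2 / 2))]
  have h2 : ((1 - x) / (1 - x + x ^ 2 / 2)) ^ N ≤ ε * Real.exp (-(6 / 5)) := by
    calc _ ≤ (Real.exp (-(g ^ 2 / 2))) ^ N :=
          pow_le_pow_left₀ (div_nonneg (by linarith) hs.le) h1 N
      _ = Real.exp (N * -(g ^ 2 / 2)) := (Real.exp_nat_mul _ _).symm
      _ ≤ Real.exp (Real.log ε + -(6 / 5)) := by
          apply Real.exp_le_exp.2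
          rw [one_div, Real.log_inv] at hN
          linarith
      _ = _ := by rw [Real.exp_add, Real.exp_log hε]
  have h3 : Real.exp (1 / (2 * (x - x ^ 2 / 2))) ≤ Real.exp (1 / 2) * Real.exp (1 / (2 * x)) := by
    rw [← Real.exp_add]
    apply Real.exp_le_exp.2
    have : 1 / (2 * (x - x ^ 2 / 2)) = 1 / (2 * x) + 1 / (2 * (2 - x)) := by
      have : 2 - x ≠ 0 := by linarith
      have e : x - x ^ 2 / 2 = x * (2 - x) / 2 := by ring
      rw [e]; field_simp; ring
    have h4 : 1 / (2 * (2 - x)) ≤ 1 / 2 := by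
      apply one_div_le_one_div_of_le <;> linarith
    linarith
  have h4 : (x - x ^ 2 / 2)⁻¹ ≤ 2 * x⁻¹ := by
    have : 2 * x⁻¹ = (x / 2)⁻¹ := by field_simp
    rw [this]
    apply inv_anti₀ <;> nlinarith
  have h5 : Real.exp (-(6 / 5)) * (Real.exp (1 / 2) * 2) ≤ 1 := by
    have e : (2 : ℝ) ≤ Real.exp (7 / 10) := by
      rw [← Real.log_le_iff_le_exp (by norm_num)]
      linarith [Real.log_two_lt_d9]
    calc _ ≤ Real.exp (-(6 / 5)) * (Real.exp (1 / 2) * Real.exp (7 / 10)) := by gcongr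
      _ = 1 := by rw [← Real.exp_add, ← Real.exp_add, Real.exp_eq_one_iff]; norm_num
  calc _ ≤ (ε * Real.exp (-(6 / 5))) *
        ((Real.exp (1 / 2) * Real.exp (1 / (2 * x))) * (2 * x⁻¹)) := by
        gcongr
    _ = (Real.exp (-(6 / 5)) * (Real.exp (1 / 2) * 2)) *
        (ε * (Real.exp (1 / (2 * x)) * x⁻¹)) := by ring
    _ ≤ 1 * (ε * (Real.exp (1 / (2 * x)) * x⁻¹)) := by
        gcongr
    _ = _ := one_mul _

lemma aux_const (g ε x : ℝ) (hg : 0 < g) (hg1 : g < 1) (hε : 0 < ε) (hε1 : ε < 1)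
    (h : 2 / 3 < ε * g) (hx : g < x) (hx1 : x < 1) :
    |Real.exp (1 / 2) - Real.exp (1 / (2 * x)) * x⁻¹| ≤ ε * (Real.exp (1 / (2 * x)) * x⁻¹) := by
  have hx0 : 0 < x := hg.trans hx
  have hg2 : 2 / 3 < x := by nlinarith
  have hε2 : 2 / 3 < ε := by nlinarith
  have a1 : 1 ≤ x⁻¹ := (one_le_inv₀ hx0).2 hx1.le
  have a2 : x⁻¹ ≤ 3 / 2 := by
    rw [inv_le_comm₀ hx0 (by norm_num)]; linarith
  have e1 : 1 / (2 * x) = x⁻¹ / 2 := by field_simp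
  rw [e1]
  have b1 : Real.exp (1 / 2) ≤ Real.exp (x⁻¹ / 2) := Real.exp_le_exp.2 (by linarith)
  have b2 : Real.exp (x⁻¹ / 2) ≤ 2 * Real.exp (1 / 2) := by
    have e : Real.exp (7 / 10) ≥ 2 := by
      rw [ge_iff_le, ← Real.log_le_iff_le_exp (by norm_num)]
      linarith [Real.log_two_lt_d9]
    have e2 : Real.exp (1 / 4) ≤ 2 := by
      rw [← Real.le_log_iff_exp_le (by norm_num)]
      linarith [Real.log_two_gt_d9]
    calc _ ≤ Real.exp (1 / 4 + 1 / 2) := Real.exp_le_exp.2 (by linarith)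
      _ = Real.exp (1 / 4) * Real.exp (1 / 2) := Real.exp_add _ _
      _ ≤ _ := by gcongr
  set E := Real.exp (x⁻¹ / 2)
  have hE : 0 < E := Real.exp_pos _
  have c1 : Real.exp (1 / 2) ≤ E * x⁻¹ := by nlinarith
  have c2 : E * x⁻¹ ≤ 3 * Real.exp (1 / 2) := by nlinarith
  rw [abs_of_nonpos (by linarith)]
  nlinarith [Real.exp_pos (1 / 2)]

/-- There is a universal constant `c > 0` such that for all
`0 < g < 1` and `0 < ε < 1` there is a real polynomial `q` of degree at most
`⌈c log(1/(εg))/g²⌉` with `|q(x) − exp(1/(2x)) x⁻¹| ≤ ε exp(1/(2x)) x⁻¹`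
for all `x ∈ (g, 1)`. -/
theorem stmt8 :
    ∃ c : ℝ, 0 < c ∧
      ∀ g ε : ℝ, 0 < g → g < 1 → 0 < ε → ε < 1 →
        ∃ q : Polynomial ℝ,
          q.natDegree ≤ ⌈c * Real.log (1 / (ε * g)) / g ^ 2⌉₊ ∧
          ∀ x ∈ Set.Ioo g 1,
            |q.eval x - Real.exp (1 / (2 * x)) * x⁻¹| ≤
              ε * (Real.exp (1 / (2 * x)) * x⁻¹) := by
  refine ⟨10, by norm_num, fun g ε hg hg1 hε hε1 => ?_⟩
  by_cases h : 2 / 3 < ε * g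
  · refine ⟨Polynomial.C (Real.exp (1 / 2)), by simp, fun x hx => ?_⟩
    rw [Polynomial.eval_C]
    exact aux_const g ε x hg hg1 hε hε1 h hx.1 hx.2
  push Not at h
  set N := ⌈10 * Real.log (1 / (ε * g)) / g ^ 2⌉₊ with hNdef
  have hN : Real.log (1 / ε) + 6 / 5 ≤ N * g ^ 2 / 2 := by
    have h1 : 10 * Real.log (1 / (ε * g)) / g ^ 2 ≤ N := Nat.le_ceil _
    rw [div_le_iff₀ (by positivity)] at h1
    have h2 : Real.log (1 / ε) ≤ Real.log (1 / (ε * g)) := by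
      apply Real.log_le_log (by positivity)
      apply one_div_le_one_div_of_le (by positivity)
      nlinarith
    have h3 : 1 / 3 ≤ Real.log (1 / (ε * g)) := by
      have := Real.one_sub_inv_le_log_of_pos (x := 1 / (ε * g)) (by positivity)
      rw [one_div, inv_inv] at this
      rw [one_div (ε * g)]
      linarith
    linarith
  refine ⟨∑ n ∈ Finset.range N, Polynomial.C (auxA n) * (1 - Polynomial.X) ^ n, ?_, ?_⟩
  · apply Polynomial.natDegree_sum_le_of_forall_le
    intro n hn
    refine (Polynomial.natDegree_C_mul_le _ _).trans ?_
    refine (Polynomial.natDegree_pow_le_of_le (m := 1) n ?_).trans ?_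
    · exact (Polynomial.natDegree_sub_le _ _).trans (by simp)
    · have := Finset.mem_range.1 hn
      omega
  · rintro x ⟨hx, hx1⟩
    have hx0 : 0 < x := hg.trans hx
    have hm := aux_main N (1 - x) (1 - x + x ^ 2 / 2) (by linarith)
      (by nlinarith) (by nlinarith)
    have e1 : 1 - (1 - x) = x := by ring
    have e2 : 1 - (1 - x + x ^ 2 / 2) = x - x ^ 2 / 2 := by ring
    rw [e1, e2] at hm
    have hr := aux_ratio N g ε x hg hx hx1 hε hN
    have ev : (∑ n ∈ Finset.range N, Polynomial.C (auxA n) * (1 - Polynomial.X) ^ n).eval x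
        = ∑ n ∈ Finset.range N, auxA n * (1 - x) ^ n := by
      simp [Polynomial.eval_finsetSum]
    rw [ev, abs_sub_comm, abs_of_nonneg (by linarith [hm.1])]
    exact hm.2.trans hr
end

section
/- There exist universal constants C₀ ≥ 1 such that the following holds for every C ≥ C₀. Let M* ∈ ℝ^{n×n} be a symmetric matrix with max_{i,j} |M*_{i,j}| ≤ μ r σ*₁ / n, where μ ≥ 1, r ≥ 1, σ*₁ ≥ σ*_r > 0, and κ* = σ*₁/σ*_r. Let W ∈ ℝ^{n×n} be a symmetric matrix with nonnegative entries whose every row has ℓ₁-norm at most n. Set α² = C μ r σ*₁ / n and λ = C² n/(μ r κ*), and define f : ℝ^{n×r} → ℝ by f(U) = (1/2)·Σ_{i,j} W_{i,j}((UUᵀ − M*)_{i,j})² + λ Σ_{i=1}^n (‖U_i‖₂ − α)₊⁴. Then every U ∈ ℝ^{n×r} at which the Fréchet derivative of f vanishes satisfies max_{1≤i≤n} ‖U_i‖₂² ≤ 4C · μ² r² κ* σ*₁ / n. -/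
open scoped BigOperators
open Matrix

attribute [local instance] Matrix.normedAddCommGroup Matrix.normedSpace

theorem posPart_diff (x : ℝ) : DifferentiableAt ℝ (fun y : ℝ => (max y 0) ^ 4) x := by
  rcases lt_trichotomy x 0 with h | h | h
  · have : (fun y : ℝ => (max y 0) ^ 4) =ᶠ[nhds x] fun _ => (0 : ℝ) := by
      filter_upwards [Iio_mem_nhds h] with y hy
      rw [max_eq_right (le_of_lt hy)]; norm_num
    exact (differentiableAt_const (0 : ℝ)).congr_of_eventuallyEq this
  · subst h
    have : HasDerivAt (fun y : ℝ => (max y 0) ^ 4) 0 0 := by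
      rw [hasDerivAt_iff_isLittleO]
      have h2 : (fun y : ℝ => y ^ 2) =o[nhds 0] fun y : ℝ => y := by
        simpa using (Asymptotics.isLittleO_pow_pow (𝕜 := ℝ) (show 1 < 2 by norm_num))
      have h3 : (fun y : ℝ => (max y 0) ^ 4) =O[nhds 0] fun y : ℝ => y ^ 2 := by
        refine Asymptotics.IsBigO.of_bound 1 ?_
        filter_upwards [Ioo_mem_nhds (show (-1 : ℝ) < 0 by norm_num) (show (0 : ℝ) < 1 by norm_num)] with y hy
        rw [Real.norm_eq_abs, Real.norm_eq_abs, abs_of_nonneg (pow_nonneg (le_max_right y 0) 4), abs_of_nonneg (sq_nonneg y), one_mul]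
        rcases le_total y 0 with h | h
        · rw [max_eq_right h, zero_pow (by norm_num)]; positivity
        · rw [max_eq_left h]
          exact pow_le_pow_of_le_one h hy.2.le (by norm_num)
      simpa using h3.trans_isLittleO h2
    exact this.differentiableAt
  · have : (fun y : ℝ => (max y 0) ^ 4) =ᶠ[nhds x] fun y => y ^ 4 := by
      filter_upwards [Ioi_mem_nhds h] with y hy
      rw [max_eq_left (le_of_lt hy)]
    exact (differentiableAt_pow 4).congr_of_eventuallyEq this

theorem reg_diff (α : ℝ) (hα : 0 < α) (s : ℝ) (hs : 0 ≤ s) :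
    DifferentiableAt ℝ (fun y : ℝ => (max (Real.sqrt y - α) 0) ^ 4) s := by
  rcases hs.eq_or_lt with h | h
  · subst h
    have : (fun y : ℝ => (max (Real.sqrt y - α) 0) ^ 4) =ᶠ[nhds 0] fun _ => (0 : ℝ) := by
      filter_upwards [Iio_mem_nhds (show (0 : ℝ) < α ^ 2 by positivity)] with y hy
      have : Real.sqrt y ≤ α := Real.sqrt_le_iff.2 ⟨hα.le, le_of_lt hy⟩
      rw [max_eq_right (by linarith)]; norm_num
    exact (differentiableAt_const (0 : ℝ)).congr_of_eventuallyEq this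
  · have h1 : DifferentiableAt ℝ (fun y : ℝ => Real.sqrt y - α) s :=
      (Real.hasDerivAt_sqrt h.ne').differentiableAt.sub_const α
    exact (posPart_diff (Real.sqrt s - α)).comp s h1

theorem entry_diff {m n : ℕ} (U : Matrix (Fin m) (Fin n) ℝ) (a : Fin m) (k : Fin n) :
    DifferentiableAt ℝ (fun V : Matrix (Fin m) (Fin n) ℝ => V a k) U := by
  have h1 : DifferentiableAt ℝ (fun V : Fin m → Fin n → ℝ => V a k) U := by fun_prop
  exact h1

theorem rowreg_diff {m n : ℕ} (U : Matrix (Fin m) (Fin n) ℝ) (a : Fin m) (α : ℝ) (hα : 0 < α) :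
    DifferentiableAt ℝ (fun V : Matrix (Fin m) (Fin n) ℝ => (max (rowNorm V a - α) 0) ^ 4) U := by
  have h1 : DifferentiableAt ℝ (fun V : Matrix (Fin m) (Fin n) ℝ => ∑ j, (V a j) ^ 2) U :=
    DifferentiableAt.fun_sum fun j _ => (entry_diff U a j).pow 2
  exact (reg_diff α hα (∑ j, (U a j) ^ 2) (by positivity)).comp U h1

theorem f_diff {n r : ℕ} (M W : Matrix (Fin n) (Fin n) ℝ) (α lam : ℝ) (hα : 0 < α)
    (U : Matrix (Fin n) (Fin r) ℝ) :
    DifferentiableAt ℝ (fun U : Matrix (Fin n) (Fin r) ℝ =>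
      (1 / 2) * (∑ i, ∑ j, W i j * ((U * Uᵀ - M) i j) ^ 2) +
          lam * ∑ i, (max (rowNorm U i - α) 0) ^ 4) U := by
  refine DifferentiableAt.add (DifferentiableAt.const_mul ?_ _) (DifferentiableAt.const_mul ?_ _)
  · refine DifferentiableAt.fun_sum fun i _ => DifferentiableAt.fun_sum fun j _ =>
      DifferentiableAt.const_mul (DifferentiableAt.pow ?_ 2) _
    simp only [Matrix.sub_apply, Matrix.mul_apply, Matrix.transpose_apply]
    exact (DifferentiableAt.fun_sum fun k _ => (entry_diff U i k).mul (entry_diff U j k)).sub_const _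
  · exact DifferentiableAt.fun_sum fun i _ => rowreg_diff U i α hα

theorem curve_deriv {n r : ℕ} (M W : Matrix (Fin n) (Fin n) ℝ) (α lam : ℝ)
    (U : Matrix (Fin n) (Fin r) ℝ) (i : Fin n) (hα : 0 < α) (hi : α < rowNorm U i) :
    HasDerivAt (fun t : ℝ => (fun U : Matrix (Fin n) (Fin r) ℝ =>
      (1 / 2) * (∑ i, ∑ j, W i j * ((U * Uᵀ - M) i j) ^ 2) +
          lam * ∑ i, (max (rowNorm U i - α) 0) ^ 4)
        (U + t • (Matrix.of fun a k => if a = i then U a k else 0)))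
      ((1 / 2) * (∑ a, ∑ b, W a b * (2 * ((U * Uᵀ) a b - M a b) *
          ((U * Uᵀ) a b * ((if a = i then 1 else 0) + (if b = i then 1 else 0))))) +
        lam * ∑ a, (if a = i then 4 * (rowNorm U i - α) ^ 3 * rowNorm U i else 0)) 0 := by
  refine HasDerivAt.add (HasDerivAt.const_mul _ ?_) (HasDerivAt.const_mul _ ?_)
  · refine HasDerivAt.fun_sum fun a _ => HasDerivAt.fun_sum fun b _ => HasDerivAt.const_mul _ ?_
    have key : ∀ t : ℝ, ((U + t • (Matrix.of fun a k => if a = i then U a k else 0)) *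
        (U + t • (Matrix.of fun a k => if a = i then U a k else 0))ᵀ - M) a b =
        (U * Uᵀ) a b * ((1 + t * (if a = i then 1 else 0)) * (1 + t * (if b = i then 1 else 0))) - M a b := by
      intro t
      simp only [Matrix.sub_apply, Matrix.mul_apply, Matrix.transpose_apply, Matrix.add_apply,
        Matrix.smul_apply, Matrix.of_apply, smul_eq_mul, Finset.sum_mul]
      congr 1
      refine Finset.sum_congr rfl fun k _ => ?_
      split_ifs <;> ring
    simp only [key]
    generalize (U * Uᵀ) a b = x
    generalize (if a = i then (1 : ℝ) else 0) = p
    generalize (if b = i then (1 : ℝ) else 0) = q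
    have l : ∀ p : ℝ, HasDerivAt (fun t : ℝ => 1 + t * p) p 0 := fun p => by
      simpa using ((hasDerivAt_id (0 : ℝ)).mul_const p).const_add 1
    have := ((((l p).mul (l q)).const_mul x).sub_const (M a b)).pow 2
    refine HasDerivAt.congr_deriv (f := fun t : ℝ => (x * ((1 + t * p) * (1 + t * q)) - M a b) ^ 2) this ?_
    simp only [Pi.mul_apply]
    norm_num
  · refine HasDerivAt.fun_sum fun a _ => ?_
    by_cases h : a = i
    · subst h
      simp only [if_true]
      have l : HasDerivAt (fun t : ℝ => ((1 + t) * rowNorm U a - α) ^ 4)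
          (4 * (rowNorm U a - α) ^ 3 * rowNorm U a) 0 := by
        have := (((((hasDerivAt_id (0 : ℝ)).const_add 1).mul_const (rowNorm U a)).sub_const α).pow 4)
        refine HasDerivAt.congr_deriv (f := fun t : ℝ => ((1 + t) * rowNorm U a - α) ^ 4) this ?_
        norm_num
      refine l.congr_of_eventuallyEq ?_
      have hc : ContinuousAt (fun t : ℝ => (1 + t) * rowNorm U a) 0 := by fun_prop
      have h1 : ∀ᶠ t in nhds (0 : ℝ), α < (1 + t) * rowNorm U a :=
        hc.eventually (lt_mem_nhds (by simpa using hi))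
      filter_upwards [h1, Ioi_mem_nhds (show (-1 : ℝ) < 0 by norm_num)] with t ht ht1
      have ht1 : -1 < t := ht1
      have e : rowNorm (U + t • (Matrix.of fun a' k => if a' = a then U a' k else 0)) a =
          (1 + t) * rowNorm U a := by
        unfold rowNorm
        have e1 : (1 + t) * Real.sqrt (∑ j, U a j ^ 2) = Real.sqrt ((1 + t) ^ 2 * ∑ j, U a j ^ 2) := by
          rw [Real.sqrt_mul (by positivity), Real.sqrt_sq (show 0 ≤ 1 + t by linarith)]
        rw [e1, Finset.mul_sum]
        congr 1
        refine Finset.sum_congr rfl fun k _ => ?_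
        simp
        ring
      rw [e, max_eq_left (by linarith)]
    · simp only [h, if_false]
      have e : ∀ t : ℝ, rowNorm (U + t • (Matrix.of fun a' k => if a' = i then U a' k else 0)) a =
          rowNorm U a := by
        intro t
        unfold rowNorm
        simp [h]
      simp only [e]
      exact hasDerivAt_const _ _

theorem data_lower {n : ℕ} (M W X : Matrix (Fin n) (Fin n) ℝ) (B : ℝ) (hM : ∀ i j, |M i j| ≤ B)
    (hWs : Wᵀ = W) (hW : ∀ i j, 0 ≤ W i j) (hWr : ∀ i, ∑ j, |W i j| ≤ n) (i : Fin n) :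
    -(n * B ^ 2) ≤ ∑ a, ∑ b, W a b * (2 * (X a b - M a b) *
          (X a b * ((if a = i then 1 else 0) + (if b = i then 1 else 0)))) := by
  have h1 : ∀ a b, W a b * (-(B ^ 2 / 2) * ((if a = i then 1 else 0) + (if b = i then 1 else 0))) ≤
      W a b * (2 * (X a b - M a b) *
          (X a b * ((if a = i then 1 else 0) + (if b = i then 1 else 0)))) := by
    intro a b
    refine mul_le_mul_of_nonneg_left ?_ (hW a b)
    have hc : (0 : ℝ) ≤ (if a = i then 1 else 0) + (if b = i then 1 else 0) := by positivity
    have hm : M a b ^ 2 ≤ B ^ 2 := sq_le_sq' (abs_le.1 (hM a b)).1 (abs_le.1 (hM a b)).2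
    rw [← mul_assoc]
    refine mul_le_mul_of_nonneg_right ?_ hc
    nlinarith [sq_nonneg (2 * X a b - M a b)]
  refine le_trans ?_ (Finset.sum_le_sum fun a _ => Finset.sum_le_sum fun b _ => h1 a b)
  have h2 : ∑ j, W i j ≤ n := by
    simpa only [abs_of_nonneg (hW _ _)] using hWr i
  have h3 : ∑ j, W j i = ∑ j, W i j :=
    Finset.sum_congr rfl fun j _ => by conv_lhs => rw [← hWs, Matrix.transpose_apply]
  have h4 : ∑ a, ∑ b, W a b * (-(B ^ 2 / 2) * ((if a = i then 1 else 0) + (if b = i then 1 else 0)))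
      = -(B ^ 2 / 2) * (∑ j, W i j + ∑ j, W j i) := by
    simp only [mul_add, Finset.sum_add_distrib, mul_ite, mul_one, mul_zero]
    rw [Finset.sum_comm]
    simp [Finset.sum_mul, mul_comm]
    rw [← Finset.sum_mul, mul_comm]
  rw [h4, h3]
  nlinarith [mul_le_mul_of_nonneg_left h2 (sq_nonneg B)]

theorem final_arith (m α C K B : ℝ) (hC : 1 ≤ C) (hK : 1 ≤ K) (hB : 0 < B) (hα : 0 < α)
    (hα2 : α ^ 2 = C * B) (hm : 0 ≤ m) (hlt : 4 * C * K * B < m ^ 2)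
    (h : 8 * C ^ 2 * ((m - α) ^ 3 * m) ≤ K * B ^ 2) : False := by
  have hCB : 0 < C * B := by positivity
  have h1 : 2 * α < m := by
    refine lt_of_pow_lt_pow_left₀ 2 hm ?_
    nlinarith
  have h2 : (m / 2) ^ 3 ≤ (m - α) ^ 3 := pow_le_pow_left₀ (by linarith) (by linarith) 3
  have h3 : (m / 2) ^ 3 * m ≤ (m - α) ^ 3 * m := mul_le_mul_of_nonneg_right h2 hm
  have h4 : (4 * C * K * B) ^ 2 < (m ^ 2) ^ 2 := pow_lt_pow_left₀ hlt (by positivity) (by norm_num)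
  have h5 : C ^ 2 * (m ^ 2) ^ 2 ≤ K * B ^ 2 := by
    nlinarith [mul_le_mul_of_nonneg_left h3 (show 0 ≤ 8 * C ^ 2 by positivity)]
  have hC2 : 1 ≤ C ^ 2 := by nlinarith
  have h6 : (m ^ 2) ^ 2 ≤ C ^ 2 * (m ^ 2) ^ 2 := le_mul_of_one_le_left (by positivity) hC2
  have h7 : K * B ^ 2 ≤ (4 * C * K * B) ^ 2 := by
    have : K ≤ 16 * C ^ 2 * K ^ 2 := by nlinarith [mul_le_mul hC2 hK (by norm_num) (by positivity)]
    nlinarith [mul_le_mul_of_nonneg_right this (sq_nonneg B)]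
  linarith

/-- Critical points of the regularized symmetric matrix-completion
objective have rows of bounded norm. -/
theorem stmt9 :
    ∃ C₀ : ℝ, 1 ≤ C₀ ∧
      ∀ C : ℝ, C₀ ≤ C →
      ∀ (n r : ℕ), 0 < n → 0 < r →
      ∀ (μ σ₁ σᵣ : ℝ), 1 ≤ μ → σᵣ ≤ σ₁ → 0 < σᵣ →
      ∀ M : Matrix (Fin n) (Fin n) ℝ, Mᵀ = M →
      (∀ i j, |M i j| ≤ μ * r * σ₁ / n) →
      ∀ W : Matrix (Fin n) (Fin n) ℝ, Wᵀ = W →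
      (∀ i j, 0 ≤ W i j) →
      (∀ i, ∑ j, |W i j| ≤ n) →
      ∀ κ α lam : ℝ, κ = σ₁ / σᵣ →
        α = Real.sqrt (C * μ * r * σ₁ / n) →
        lam = C ^ 2 * n / (μ * r * κ) →
      ∀ f : Matrix (Fin n) (Fin r) ℝ → ℝ,
        (f = fun U => (1 / 2) * (∑ i, ∑ j, W i j * ((U * Uᵀ - M) i j) ^ 2) +
          lam * ∑ i, (max (rowNorm U i - α) 0) ^ 4) →
      ∀ U : Matrix (Fin n) (Fin r) ℝ,
        fderiv ℝ f U = 0 →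
        ∀ i, (rowNorm U i) ^ 2 ≤ 4 * C * μ ^ 2 * r ^ 2 * κ * σ₁ / n := by
  refine ⟨1, le_refl _, ?_⟩
  intro C hC n r hn hr μ σ₁ σᵣ hμ hσ hσr M hMs hM W hWs hW hWr κ α lam hκ hα hlam f hf U hU i
  have hn' : (0 : ℝ) < n := by exact_mod_cast hn
  have hr' : (1 : ℝ) ≤ r := by exact_mod_cast hr
  have hσ1 : 0 < σ₁ := by linarith
  have hκ1 : 1 ≤ κ := by rw [hκ, le_div_iff₀ hσr]; linarith
  have hμ0 : 0 < μ := by linarith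
  have hr0 : (0 : ℝ) < r := by linarith
  have hκ0 : 0 < κ := by linarith
  have hC0 : 0 < C := by linarith
  have hB : 0 < μ * r * σ₁ / n := by positivity
  have hαe : C * μ * r * σ₁ / n = C * (μ * r * σ₁ / n) := by ring
  have hα0 : 0 < α := by rw [hα]; exact Real.sqrt_pos.2 (by positivity)
  have hα2 : α ^ 2 = C * (μ * r * σ₁ / n) := by
    rw [hα, Real.sq_sqrt (by positivity), hαe]
  have hK : 1 ≤ μ * r * κ := by
    have := one_le_mul_of_one_le_of_one_le hμ hr'
    exact one_le_mul_of_one_le_of_one_le this hκ1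
  have hgoal : 4 * C * μ ^ 2 * r ^ 2 * κ * σ₁ / n = 4 * C * (μ * r * κ) * (μ * r * σ₁ / n) := by ring
  rw [hgoal]
  by_contra hcon
  push Not at hcon
  have hm : 0 ≤ rowNorm U i := Real.sqrt_nonneg _
  have hi : α < rowNorm U i := by
    refine lt_of_pow_lt_pow_left₀ 2 hm ?_
    have hCB : 0 < C * (μ * r * σ₁ / n) := by positivity
    nlinarith
  have hd := f_diff M W α lam hα0 U
  have hc := curve_deriv M W α lam U i hα0 hi
  rw [← hf] at hd
  have hfd : HasFDerivAt f (0 : Matrix (Fin n) (Fin r) ℝ →L[ℝ] ℝ) U := by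
    rw [← hU]; exact hd.hasFDerivAt
  have hline : HasDerivAt (fun t : ℝ => U + t • (Matrix.of fun a k => if a = i then U a k else 0))
      (Matrix.of fun a k => if a = i then U a k else 0) 0 := by
    have h0 := ((hasDerivAt_id (0 : ℝ)).smul_const
      (Matrix.of fun a k => if a = i then U a k else 0)).const_add U
    rw [one_smul] at h0
    exact h0
  have hg := HasFDerivAt.comp_hasDerivAt_of_eq (0 : ℝ) hfd hline (by simp)
  rw [← hf] at hc
  have heq := (hc.unique hg).trans (show _ = (0 : ℝ) from rfl)
  have hlow := data_lower M W (U * Uᵀ) _ hM hWs hW hWr i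
  simp only [Finset.sum_ite_eq', Finset.mem_univ, if_true] at heq
  refine final_arith _ α C (μ * r * κ) _ hC hK hB hα0 hα2 hm hcon ?_
  have h8 : 8 * (lam * ((rowNorm U i - α) ^ 3 * rowNorm U i)) ≤ n * (μ * r * σ₁ / n) ^ 2 := by
    linarith
  have h9 : lam * (μ * r * κ) = C ^ 2 * n := by
    rw [hlam]; field_simp
  have h10 := mul_le_mul_of_nonneg_right h8 (show 0 ≤ μ * r * κ by positivity)
  refine le_of_mul_le_mul_right ?_ hn'
  calc _ = 8 * (C ^ 2 * n) * ((rowNorm U i - α) ^ 3 * rowNorm U i) := by ring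
    _ = 8 * (lam * ((rowNorm U i - α) ^ 3 * rowNorm U i)) * (μ * r * κ) := by rw [← h9]; ring
    _ ≤ _ := h10
    _ = _ := by ring
end

section
/- Let n be an even positive integer, let 2^{-1/4} < β ≤ 9/10, and let γ = (1+β²)/(1−β²). Define u ∈ ℝⁿ by u_i = β for 1 ≤ i ≤ n/2 and u_i = −β for n/2 < i ≤ n, and define W ∈ ℝ^{n×n} by W_{i,j} = γ if i and j lie in the same half (both ≤ n/2 or both > n/2) and W_{i,j} = 1 otherwise. Define g : ℝⁿ → ℝ by g(x) = (1/2) Σ_{i,j=1}^{n} W_{i,j} (x_i x_j − 1)². Then u is a local minimum of g, while u uᵀ is not equal to the all-ones matrix (the ground-truth matrix M* = 𝟙𝟙ᵀ). -/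
open scoped BigOperators
open Matrix

lemma aux_sum (m : ℕ) (c : ℝ) (p q : Fin m → ℝ) :
    ∑ i, ∑ j, c * (p i * q j - 1) ^ 2 =
      c * ((∑ i, p i ^ 2) * (∑ j, q j ^ 2) - 2 * ((∑ i, p i) * (∑ j, q j)) + (m : ℝ) ^ 2) := by
  have h : ∀ i j, c * (p i * q j - 1) ^ 2
      = c * (p i ^ 2 * q j ^ 2) - (2 * c) * (p i * q j) + c := by
    intro i j; ring
  simp only [h, Finset.sum_add_distrib, Finset.sum_sub_distrib, ← Finset.mul_sum,
    ← Finset.sum_mul, Finset.sum_const, Finset.card_univ, Fintype.card_fin, nsmul_eq_mul]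
  ring

/-- reduced one-dimensional objective -/
lemma aux_F (β γ t r ε : ℝ) (hβ : 0 < β) (hγ0 : 0 < γ) (hγ : γ * (1 - β ^ 2) = 1 + β ^ 2)
    (ht : |t| ≤ ε) (hr : |r| ≤ ε)
    (hε : ε * (4 * γ * β + 4 * β) ≤ 4 * (γ * β ^ 2 - β ^ 2 - 1)) :
    γ * (β ^ 4 + β ^ 4) + 2 * β ^ 2 * β ^ 2 - 2 * γ * (β ^ 2 + β ^ 2) + 4 * β * β ≤
    γ * ((β + t) ^ 4 + (β + r) ^ 4) + 2 * (β + t) ^ 2 * (β + r) ^ 2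
      - 2 * γ * ((β + t) ^ 2 + (β + r) ^ 2) + 4 * (β + t) * (β + r) := by
  obtain ⟨t1, t2⟩ := abs_le.1 ht
  obtain ⟨r1, r2⟩ := abs_le.1 hr
  have e : γ * ((β + t) ^ 4 + (β + r) ^ 4) + 2 * (β + t) ^ 2 * (β + r) ^ 2
      - 2 * γ * ((β + t) ^ 2 + (β + r) ^ 2) + 4 * (β + t) * (β + r)
      - (γ * (β ^ 4 + β ^ 4) + 2 * β ^ 2 * β ^ 2 - 2 * γ * (β ^ 2 + β ^ 2) + 4 * β * β)
      = (4 * (γ * β ^ 2 - β ^ 2 - 1) - ε * (4 * γ * β + 4 * β)) * (t ^ 2 + r ^ 2)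
        + (4 * β ^ 2 + 2) * (t + r) ^ 2
        + 4 * γ * β * (t ^ 2 * (t + ε) + r ^ 2 * (r + ε))
        + 2 * β * ((t + r) ^ 2 * (t + r + 2 * ε) / 2 + (t - r) ^ 2 * (2 * ε - (t + r)) / 2)
        + (γ * (t ^ 4 + r ^ 4) + 2 * t ^ 2 * r ^ 2) := by
    have hg : γ = 1 + β ^ 2 + γ * β ^ 2 := by linarith
    linear_combination (-4 * β * (t + r) - 2 * (t ^ 2 + r ^ 2)) * hγ
  have h1 : 0 ≤ (4 * (γ * β ^ 2 - β ^ 2 - 1) - ε * (4 * γ * β + 4 * β)) * (t ^ 2 + r ^ 2) :=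
    mul_nonneg (by linarith) (by positivity)
  have a1 : 0 ≤ t + ε := by linarith
  have a2 : 0 ≤ r + ε := by linarith
  have a3 : 0 ≤ t + r + 2 * ε := by linarith
  have a4 : 0 ≤ 2 * ε - (t + r) := by linarith
  have h2 : 0 ≤ (4 * β ^ 2 + 2) * (t + r) ^ 2
        + 4 * γ * β * (t ^ 2 * (t + ε) + r ^ 2 * (r + ε))
        + 2 * β * ((t + r) ^ 2 * (t + r + 2 * ε) / 2 + (t - r) ^ 2 * (2 * ε - (t + r)) / 2)
        + (γ * (t ^ 4 + r ^ 4) + 2 * t ^ 2 * r ^ 2) := by positivity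
  linarith

/-- In the semi-random (weighted) model, the non-convex symmetric
matrix-completion objective `g(x) = (1/2)‖xxᵀ − 𝟙𝟙ᵀ‖_W²` has a spurious local minimum:
the vector `u` (equal to `β` on the first half and `−β` on the second half) is a local
minimum of `g`, yet `uuᵀ` is not the all-ones ground-truth matrix. -/
theorem stmt14 (n : ℕ) (hn : 0 < n) (hn2 : Even n)
    (β : ℝ) (hβl : (2 : ℝ) ^ (-(1 / 4 : ℝ)) < β) (hβu : β ≤ 9 / 10)
    (γ : ℝ) (hγ : γ = (1 + β ^ 2) / (1 - β ^ 2))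
    (u : Fin n → ℝ) (hu : u = fun i : Fin n => if (i : ℕ) < n / 2 then β else -β)
    (W : Matrix (Fin n) (Fin n) ℝ)
    (hW : W = Matrix.of fun i j : Fin n =>
      if (((i : ℕ) < n / 2) ↔ ((j : ℕ) < n / 2)) then γ else 1)
    (g : (Fin n → ℝ) → ℝ)
    (hg : g = fun x => (1 / 2) * ∑ i, ∑ j, W i j * (x i * x j - 1) ^ 2) :
    IsLocalMin g u ∧
      Matrix.vecMulVec u u ≠ Matrix.of fun _ _ => (1 : ℝ) := by
  have hβ0 : 0 < β := lt_trans (by positivity) hβl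
  have hβ4 : 1 / 2 < β ^ 4 := by
    have h := pow_lt_pow_left₀ hβl (by positivity) (n := 4) (by norm_num)
    rw [← Real.rpow_natCast, ← Real.rpow_mul (by norm_num)] at h
    have e : (-(1 / 4 : ℝ)) * ((4 : ℕ) : ℝ) = -1 := by norm_num
    rw [e, Real.rpow_neg_one] at h
    linarith
  have hβ2 : β ^ 2 < 1 := by nlinarith
  have hβ2' : 1 / 2 < β ^ 2 := by nlinarith
  have hγ0 : 0 < γ := by rw [hγ]; exact div_pos (by positivity) (by linarith)
  have hγ1 : γ * (1 - β ^ 2) = 1 + β ^ 2 := by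
    rw [hγ]; exact div_mul_cancel₀ _ (by linarith)
  have hc : 0 < γ * β ^ 2 - β ^ 2 - 1 := by
    have : 0 < (γ * β ^ 2 - β ^ 2 - 1) * (1 - β ^ 2) := by
      have : (γ * β ^ 2 - β ^ 2 - 1) * (1 - β ^ 2) = 2 * β ^ 4 + β ^ 2 - 1 := by
        linear_combination β ^ 2 * hγ1
      linarith
    exact pos_of_mul_pos_left this (by linarith)
  refine ⟨?_, ?_⟩
  swap
  · intro h
    have h := congrFun (congrFun h ⟨0, hn⟩) ⟨0, hn⟩
    simp only [Matrix.vecMulVec_apply, Matrix.of_apply, hu] at h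
    split_ifs at h <;> nlinarith
  obtain ⟨m, rfl⟩ := hn2
  have hm : 0 < m := by omega
  have hmR : (0 : ℝ) < m := by exact_mod_cast hm
  have hm2 : (m + m) / 2 = m := by omega
  rw [hm2] at hu hW
  have key : ∀ x : Fin (m + m) → ℝ, g x = 1 / 2 * (
      γ * ((∑ i : Fin m, x (Fin.castAdd m i) ^ 2) ^ 2 + (∑ i : Fin m, x (Fin.natAdd m i) ^ 2) ^ 2)
      + 2 * (∑ i : Fin m, x (Fin.castAdd m i) ^ 2) * (∑ i : Fin m, x (Fin.natAdd m i) ^ 2)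
      - 2 * γ * ((∑ i : Fin m, x (Fin.castAdd m i)) ^ 2 + (∑ i : Fin m, x (Fin.natAdd m i)) ^ 2)
      - 4 * (∑ i : Fin m, x (Fin.castAdd m i)) * (∑ i : Fin m, x (Fin.natAdd m i))
      + 2 * (γ + 1) * (m : ℝ) ^ 2) := by
    intro x
    have w1 : ∀ i j : Fin m, W (Fin.castAdd m i) (Fin.castAdd m j) = γ := by
      intro i j; simp [hW]
    have w2 : ∀ i j : Fin m, W (Fin.castAdd m i) (Fin.natAdd m j) = 1 := by
      intro i j; simp [hW]
    have w3 : ∀ i j : Fin m, W (Fin.natAdd m i) (Fin.castAdd m j) = 1 := by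
      intro i j; simp [hW]
    have w4 : ∀ i j : Fin m, W (Fin.natAdd m i) (Fin.natAdd m j) = γ := by
      intro i j; simp [hW]
    rw [hg]
    simp only [Fin.sum_univ_add, w1, w2, w3, w4, Finset.sum_add_distrib]
    rw [aux_sum m γ (fun i => x (Fin.castAdd m i)) (fun i => x (Fin.castAdd m i)),
      aux_sum m 1 (fun i => x (Fin.castAdd m i)) (fun i => x (Fin.natAdd m i)),
      aux_sum m 1 (fun i => x (Fin.natAdd m i)) (fun i => x (Fin.castAdd m i)),
      aux_sum m γ (fun i => x (Fin.natAdd m i)) (fun i => x (Fin.natAdd m i))]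
    ring
  have u1 : ∀ i : Fin m, u (Fin.castAdd m i) = β := by intro i; simp [hu]
  have u2 : ∀ i : Fin m, u (Fin.natAdd m i) = -β := by intro i; simp [hu]
  obtain ⟨ε, hε0, hε⟩ : ∃ ε : ℝ, 0 < ε ∧
      ε * (4 * γ * β + 4 * β) ≤ 4 * (γ * β ^ 2 - β ^ 2 - 1) := by
    have hp : 0 < 4 * γ * β + 4 * β := by positivity
    exact ⟨4 * (γ * β ^ 2 - β ^ 2 - 1) / (4 * γ * β + 4 * β), div_pos (by linarith) hp,
      (div_mul_cancel₀ _ hp.ne').le⟩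
  have c1 : ∀ᶠ x in nhds u, |(∑ i : Fin m, x (Fin.castAdd m i)) / m - β| < ε := by
    have hcont : Continuous fun x : Fin (m + m) → ℝ =>
      |(∑ i : Fin m, x (Fin.castAdd m i)) / m - β| := by fun_prop
    refine (hcont.tendsto u).eventually_lt_const ?_
    simp only [u1, Finset.sum_const, Finset.card_univ, Fintype.card_fin, nsmul_eq_mul]
    rw [mul_div_cancel_left₀ _ hmR.ne']; simpa using hε0
  have c2 : ∀ᶠ x in nhds u, |-(∑ i : Fin m, x (Fin.natAdd m i)) / m - β| < ε := by
    have hcont : Continuous fun x : Fin (m + m) → ℝ =>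
      |-(∑ i : Fin m, x (Fin.natAdd m i)) / m - β| := by fun_prop
    refine (hcont.tendsto u).eventually_lt_const ?_
    simp only [u2, Finset.sum_const, Finset.card_univ, Fintype.card_fin, nsmul_eq_mul]
    rw [mul_neg, neg_neg, mul_div_cancel_left₀ _ hmR.ne']; simpa using hε0
  filter_upwards [c1, c2] with x hx1 hx2
  rw [key, key]
  simp only [u1, u2, Finset.sum_const, Finset.card_univ, Fintype.card_fin, nsmul_eq_mul]
  have k1 := sq_sum_le_card_mul_sum_sq (s := Finset.univ) (f := fun i : Fin m => x (Fin.castAdd m i))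
  have k2 := sq_sum_le_card_mul_sum_sq (s := Finset.univ) (f := fun i : Fin m => x (Fin.natAdd m i))
  simp only [Finset.card_univ, Fintype.card_fin] at k1 k2
  generalize (∑ i : Fin m, x (Fin.castAdd m i) ^ 2) = P at *
  generalize (∑ i : Fin m, x (Fin.natAdd m i) ^ 2) = Q at *
  generalize (∑ i : Fin m, x (Fin.castAdd m i)) = a at *
  generalize (∑ i : Fin m, x (Fin.natAdd m i)) = b at *
  have hF := aux_F β γ (a / m - β) (-b / m - β) ε hβ0 hγ0 hγ1 hx1.le hx2.le hε
  rw [add_sub_cancel, add_sub_cancel] at hF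
  obtain ⟨α, rfl⟩ : ∃ α, a = m * α := ⟨a / m, by field_simp⟩
  obtain ⟨δ, rfl⟩ : ∃ δ, b = -(m * δ) := ⟨-(b / m), by field_simp⟩
  rw [neg_neg, mul_div_cancel_left₀ _ hmR.ne', mul_div_cancel_left₀ _ hmR.ne'] at hF
  have k1' : m * α ^ 2 ≤ P := le_of_mul_le_mul_left (by nlinarith) hmR
  have k2' : m * δ ^ 2 ≤ Q := le_of_mul_le_mul_left (by nlinarith) hmR
  have hF2 := mul_le_mul_of_nonneg_left hF (sq_nonneg (m : ℝ))
  have p1 : (m * α ^ 2) ^ 2 ≤ P ^ 2 := by gcongr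
  have p2 : (m * δ ^ 2) ^ 2 ≤ Q ^ 2 := by gcongr
  have p3 : (m * α ^ 2) * (m * δ ^ 2) ≤ P * Q :=
    mul_le_mul k1' k2' (by positivity) (le_trans (by positivity) k1')
  have p4 := mul_le_mul_of_nonneg_left (add_le_add p1 p2) hγ0.le
  nlinarith
end

section
/- Let n be a positive integer divisible by 4 and k = n/4; partition {1,…,n} into four consecutive blocks of size k, and let b(i) ∈ {1,2,3,4} denote the block of index i. Define M* ∈ ℝ^{n×n} by M*_{i,j} = 5 if ⌈b(i)/2⌉ = ⌈b(j)/2⌉ and M*_{i,j} = 3 otherwise, and define W ∈ ℝ^{n×n} by W_{i,j} = 2 if b(i) ≡ b(j) (mod 2) and W_{i,j} = 1 otherwise. Let N = W*M* be the entrywise (Hadamard) product. Then N is symmetric; the blockwise-constant vectors v₁ (value 1 on all blocks) and v₂ (value 1 on blocks 1,3 and −1 on blocks 2,4) are eigenvectors of N with eigenvalues 6n and 2n respectively; all other eigenvalues of N are 3n/2, n/2, and 0 (the latter with multiplicity n−4), so v₁ and v₂ span the eigenspace of the two largest eigenvalues of N; and v₂ is orthogonal to the column space of M*. In particular, the top-two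 eigenspace of W*M* contains a unit vector orthogonal to the column space of M*. -/
open scoped BigOperators
open Matrix


lemma aux_sum_s15 (k : ℕ) (hk : 0 < k) (f : ℕ → ℝ) :
    ∑ i : Fin (4 * k), f ((i : ℕ) / k) = k * (f 0 + f 1 + f 2 + f 3) := by
  rw [Fin.sum_univ_eq_sum_range (fun i => f (i / k)) (4 * k)]
  have h : ∀ m : ℕ, ∑ i ∈ Finset.range (m * k), f (i / k) = k * ∑ j ∈ Finset.range m, f j := by
    intro m
    induction m with
    | zero => simp
    | succ m ih =>
      rw [Nat.succ_mul, Finset.sum_range_add, ih, Finset.sum_range_succ, mul_add]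
      congr 1
      rw [Finset.sum_congr rfl (g := fun _ => f m)]
      · simp
      · intro x hx
        have hx' := Finset.mem_range.1 hx
        congr 1
        rw [Nat.add_comm, Nat.add_mul_div_right _ _ hk, Nat.div_eq_of_lt hx', Nat.zero_add]
  rw [h 4]
  simp [Finset.sum_range_succ]

lemma aux_main_s15 (n : ℕ) (hn : 0 < n) (t s : Fin n → ℝ)
    (ht : ∀ i, t i * t i = 1) (hs : ∀ i, s i * s i = 1)
    (h2 : ∑ i, t i = 0) (h3 : ∑ i, s i = 0) (h4 : ∑ i, s i * t i = 0)
    (M N : Matrix (Fin n) (Fin n) ℝ) (hM : ∀ i j, M i j = 4 + s i * s j)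
    (hN : ∀ i j, N i j = (3 / 2 + 1 / 2 * (t i * t j)) * (4 + s i * s j))
    (v₁ v₂ : Fin n → ℝ) (hv₁ : v₁ = fun _ => 1) (hv₂ : v₂ = t) :
    Nᵀ = N ∧
    N.mulVec v₁ = (6 * n : ℝ) • v₁ ∧
    N.mulVec v₂ = (2 * n : ℝ) • v₂ ∧
    (∀ (μ : ℝ) (x : Fin n → ℝ), x ≠ 0 → N.mulVec x = μ • x →
      μ = 6 * n ∨ μ = 2 * n ∨ μ = 3 * n / 2 ∨ μ = n / 2 ∨ μ = 0) ∧
    Module.finrank ℝ (LinearMap.ker N.mulVecLin) = n - 4 ∧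
    (∀ x : Fin n → ℝ, N.mulVec x = (6 * n : ℝ) • x → ∃ a : ℝ, x = a • v₁) ∧
    (∀ x : Fin n → ℝ, N.mulVec x = (2 * n : ℝ) • x → ∃ a : ℝ, x = a • v₂) ∧
    (∀ j, ∑ i, v₂ i * M i j = 0) ∧
    (∃ x : Fin n → ℝ, (∃ a b : ℝ, x = a • v₁ + b • v₂) ∧
      (∑ i, (x i) ^ 2 = 1) ∧ ∀ j, ∑ i, x i * M i j = 0) := by
  subst hv₁ hv₂
  have hn0 : (0 : ℝ) < n := by exact_mod_cast hn
  have key : ∀ x i, N.mulVec x i = 6 * (∑ j, x j) + 2 * (∑ j, v₂ j * x j) * v₂ i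
      + 3 / 2 * (∑ j, s j * x j) * s i + 1 / 2 * (∑ j, s j * v₂ j * x j) * (s i * v₂ i) := by
    intro x i
    simp only [Matrix.mulVec, dotProduct, hN, Finset.mul_sum, Finset.sum_mul,
      ← Finset.sum_add_distrib]
    refine Finset.sum_congr rfl fun j _ => ?_
    ring
  have comb : ∀ (y : Fin n → ℝ) (a b c d : ℝ),
      (∀ i, y i = a + b * v₂ i + c * s i + d * (s i * v₂ i)) →
      (∑ j, y j) = n * a ∧ (∑ j, v₂ j * y j) = n * b ∧ (∑ j, s j * y j) = n * c ∧
      (∑ j, s j * v₂ j * y j) = n * d := by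
    intro y a b c d hy
    have e : ∀ p q r w : ℝ, ∑ j, (p + q * v₂ j + r * s j + w * (s j * v₂ j)) = n * p := by
      intro p q r w
      simp only [Finset.sum_add_distrib, ← Finset.mul_sum, h2, h3, h4]
      simp
    refine ⟨?_, ?_, ?_, ?_⟩
    · rw [← e a b c d]
      exact Finset.sum_congr rfl fun j _ => hy j
    · rw [← e b a d c]
      refine Finset.sum_congr rfl fun j _ => ?_
      rw [hy]
      linear_combination (b + d * s j) * ht j
    · rw [← e c d a b]
      refine Finset.sum_congr rfl fun j _ => ?_
      rw [hy]
      linear_combination (c + d * v₂ j) * hs j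
    · rw [← e d c b a]
      refine Finset.sum_congr rfl fun j _ => ?_
      rw [hy]
      linear_combination (b * s j + d * s j * s j) * ht j + (c * v₂ j + d) * hs j
  have eig : ∀ (μ : ℝ) (x : Fin n → ℝ), N.mulVec x = μ • x →
      (6 * n - μ) * (∑ j, x j) = 0 ∧ (2 * n - μ) * (∑ j, v₂ j * x j) = 0 ∧
      (3 * n / 2 - μ) * (∑ j, s j * x j) = 0 ∧ (n / 2 - μ) * (∑ j, s j * v₂ j * x j) = 0 := by
    intro μ x hx
    obtain ⟨c1, c2, c3, c4⟩ := comb (N.mulVec x) _ _ _ _ (key x)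
    have q : ∀ g : Fin n → ℝ, ∑ j, g j * (N.mulVec x) j = μ * ∑ j, g j * x j := by
      intro g
      rw [hx, Finset.mul_sum]
      refine Finset.sum_congr rfl fun j _ => ?_
      simp only [Pi.smul_apply, smul_eq_mul]
      ring
    have q1 := q (fun _ => 1)
    simp only [one_mul] at q1
    have q2 := q v₂
    have q3 := q s
    have q4 := q (fun j => s j * v₂ j)
    refine ⟨?_, ?_, ?_, ?_⟩
    · linarith
    · linarith
    · linarith
    · linarith
  have orth : ∀ j, ∑ i, v₂ i * M i j = 0 := by
    intro j
    rw [Finset.sum_congr rfl (g := fun i => 4 * v₂ i + s j * (s i * v₂ i))]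
    · simp [Finset.sum_add_distrib, ← Finset.mul_sum, h2, h4]
    · intro i _
      rw [hM]
      ring
  refine ⟨?_, ?_, ?_, ?_, ?_, ?_, ?_, orth, ?_⟩
  · ext i j
    simp only [Matrix.transpose_apply, hN]
    ring
  · ext i
    obtain ⟨c1, c2, c3, c4⟩ := comb (fun _ => 1) 1 0 0 0 (by intro i; ring)
    rw [key, c1, c2, c3, c4]
    simp
  · ext i
    obtain ⟨c1, c2, c3, c4⟩ := comb v₂ 0 1 0 0 (by intro i; ring)
    rw [key, c1, c2, c3, c4]
    simp
  · intro μ x hx0 hx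
    by_contra! hc
    obtain ⟨m1, m2, m3, m4, m5⟩ := hc
    obtain ⟨e1, e2, e3, e4⟩ := eig μ x hx
    have e1 := (mul_eq_zero.1 e1).resolve_left (sub_ne_zero.2 m1.symm)
    have e2 := (mul_eq_zero.1 e2).resolve_left (sub_ne_zero.2 m2.symm)
    have e3 := (mul_eq_zero.1 e3).resolve_left (sub_ne_zero.2 m3.symm)
    have e4 := (mul_eq_zero.1 e4).resolve_left (sub_ne_zero.2 m4.symm)
    apply hx0
    ext i
    have hi := key x i
    rw [hx, e1, e2, e3, e4] at hi
    simpa [m5] using hi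
  · let A : (Fin n → ℝ) →ₗ[ℝ] (Fin 4 → ℝ) :=
      (Matrix.of ![fun _ => 1, v₂, s, fun j => s j * v₂ j]).mulVecLin
    have hA : ∀ x, A x = ![∑ j, x j, ∑ j, v₂ j * x j, ∑ j, s j * x j, ∑ j, s j * v₂ j * x j] := by
      intro x
      ext m
      fin_cases m <;> simp [A, Matrix.mulVec, dotProduct]
    have hker : LinearMap.ker N.mulVecLin = LinearMap.ker A := by
      ext x
      rw [LinearMap.mem_ker, LinearMap.mem_ker, hA, Matrix.mulVecLin_apply]
      constructor
      · intro hx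
        obtain ⟨e1, e2, e3, e4⟩ := eig 0 x (by rw [hx, zero_smul])
        have e1 := (mul_eq_zero.1 e1).resolve_left (by intro h; linarith)
        have e2 := (mul_eq_zero.1 e2).resolve_left (by intro h; linarith)
        have e3 := (mul_eq_zero.1 e3).resolve_left (by intro h; linarith)
        have e4 := (mul_eq_zero.1 e4).resolve_left (by intro h; linarith)
        rw [e1, e2, e3, e4]
        ext m
        fin_cases m <;> rfl
      · intro hx
        have e1 : ∑ j, x j = 0 := congrFun hx 0
        have e2 : ∑ j, v₂ j * x j = 0 := congrFun hx 1
        have e3 : ∑ j, s j * x j = 0 := congrFun hx 2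
        have e4 : ∑ j, s j * v₂ j * x j = 0 := congrFun hx 3
        ext i
        rw [key, e1, e2, e3, e4]
        simp
    have hsurj : LinearMap.range A = ⊤ := by
      rw [LinearMap.range_eq_top]
      intro y
      refine ⟨fun i => y 0 / n + y 1 / n * v₂ i + y 2 / n * s i + y 3 / n * (s i * v₂ i), ?_⟩
      obtain ⟨c1, c2, c3, c4⟩ := comb _ _ _ _ _ (fun i => rfl :
        ∀ i, (fun i => y 0 / n + y 1 / n * v₂ i + y 2 / n * s i + y 3 / n * (s i * v₂ i)) i = _)
      rw [hA, c1, c2, c3, c4]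
      ext m
      fin_cases m <;> simp <;> field_simp
    have hr := LinearMap.finrank_range_add_finrank_ker A
    rw [hsurj, finrank_top] at hr
    simp only [Module.finrank_fin_fun] at hr
    rw [hker]
    omega
  · intro x hx
    obtain ⟨e1, e2, e3, e4⟩ := eig _ x hx
    have e2 := (mul_eq_zero.1 e2).resolve_left (by intro h; linarith)
    have e3 := (mul_eq_zero.1 e3).resolve_left (by intro h; linarith)
    have e4 := (mul_eq_zero.1 e4).resolve_left (by intro h; linarith)
    refine ⟨(∑ j, x j) / n, ?_⟩
    ext i
    have hi := key x i
    rw [hx, e2, e3, e4] at hi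
    simp only [Pi.smul_apply, smul_eq_mul] at hi ⊢
    field_simp
    linarith
  · intro x hx
    obtain ⟨e1, e2, e3, e4⟩ := eig _ x hx
    have e1 := (mul_eq_zero.1 e1).resolve_left (by intro h; linarith)
    have e3 := (mul_eq_zero.1 e3).resolve_left (by intro h; linarith)
    have e4 := (mul_eq_zero.1 e4).resolve_left (by intro h; linarith)
    refine ⟨(∑ j, v₂ j * x j) / n, ?_⟩
    ext i
    have hi := key x i
    rw [hx, e1, e3, e4] at hi
    simp only [Pi.smul_apply, smul_eq_mul] at hi ⊢
    field_simp
    linarith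
  · refine ⟨(1 / √(n : ℝ)) • v₂, ⟨0, 1 / √(n : ℝ), by simp⟩, ?_, ?_⟩
    · rw [Finset.sum_congr rfl (g := fun _ => 1 / (n : ℝ))]
      · simp
        field_simp
      · intro i _
        simp only [Pi.smul_apply, smul_eq_mul]
        rw [mul_pow, div_pow, Real.sq_sqrt hn0.le, sq (v₂ i), ht]
        simp
    · intro j
      have := orth j
      simp only [Pi.smul_apply, smul_eq_mul, mul_assoc, ← Finset.mul_sum, this, mul_zero]

/-- The SVD counter-example: with four blocks of size `k = n/4`,
`M*` (value 5 on same half, 3 otherwise) and weights `W` (2 on blocks of equal parity,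
1 otherwise), the Hadamard product `N = W*M*` is symmetric; the blockwise-constant
vectors `v₁` and `v₂` are eigenvectors with eigenvalues `6n` and `2n`; all other
eigenvalues are `3n/2`, `n/2` and `0` (the latter with multiplicity `n−4`), the
eigenspaces of `6n` and `2n` are spanned by `v₁` and `v₂`; and `v₂` is orthogonal to
the column space of `M*`.  In particular, the top-two eigenspace of `W*M*` contains a
unit vector orthogonal to the column space of `M*`. -/
theorem stmt15 (n : ℕ) (hn : 0 < n) (hn4 : 4 ∣ n) (k : ℕ) (hk : k = n / 4)
    (blk : Fin n → ℕ) (hblk : blk = fun i : Fin n => (i : ℕ) / k)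
    (M : Matrix (Fin n) (Fin n) ℝ)
    (hM : M = Matrix.of fun i j => if blk i / 2 = blk j / 2 then (5 : ℝ) else 3)
    (W : Matrix (Fin n) (Fin n) ℝ)
    (hW : W = Matrix.of fun i j => if blk i % 2 = blk j % 2 then (2 : ℝ) else 1)
    (N : Matrix (Fin n) (Fin n) ℝ)
    (hN : N = Matrix.of fun i j => W i j * M i j)
    (v₁ v₂ : Fin n → ℝ)
    (hv₁ : v₁ = fun _ => 1)
    (hv₂ : v₂ = fun i => if blk i % 2 = 0 then (1 : ℝ) else -1) :
    Nᵀ = N ∧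
    N.mulVec v₁ = (6 * n : ℝ) • v₁ ∧
    N.mulVec v₂ = (2 * n : ℝ) • v₂ ∧
    (∀ (μ : ℝ) (x : Fin n → ℝ), x ≠ 0 → N.mulVec x = μ • x →
      μ = 6 * n ∨ μ = 2 * n ∨ μ = 3 * n / 2 ∨ μ = n / 2 ∨ μ = 0) ∧
    Module.finrank ℝ (LinearMap.ker N.mulVecLin) = n - 4 ∧
    (∀ x : Fin n → ℝ, N.mulVec x = (6 * n : ℝ) • x → ∃ a : ℝ, x = a • v₁) ∧
    (∀ x : Fin n → ℝ, N.mulVec x = (2 * n : ℝ) • x → ∃ a : ℝ, x = a • v₂) ∧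
    (∀ j, ∑ i, v₂ i * M i j = 0) ∧
    (∃ x : Fin n → ℝ, (∃ a b : ℝ, x = a • v₁ + b • v₂) ∧
      (∑ i, (x i) ^ 2 = 1) ∧ ∀ j, ∑ i, x i * M i j = 0) := by
  obtain ⟨m, rfl⟩ := hn4
  have hkm : k = m := by omega
  subst hkm
  have hk0 : 0 < k := by omega
  have hb : ∀ i, blk i < 4 := by
    intro i
    rw [hblk]
    exact Nat.div_lt_of_lt_mul (by have := i.2; omega)
  have S : ∀ f : ℕ → ℝ, ∑ i, f (blk i) = k * (f 0 + f 1 + f 2 + f 3) := by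
    intro f
    rw [hblk]
    exact aux_sum_s15 k hk0 f
  refine aux_main_s15 (4 * k) hn (fun i => if blk i % 2 = 0 then (1 : ℝ) else -1)
    (fun i => if blk i / 2 = 0 then (1 : ℝ) else -1) ?_ ?_ ?_ ?_ ?_ M N ?_ ?_ v₁ v₂ hv₁ hv₂
  · intro i
    split_ifs <;> norm_num
  · intro i
    split_ifs <;> norm_num
  · rw [S (fun b => if b % 2 = 0 then (1 : ℝ) else -1)]
    norm_num
  · rw [S (fun b => if b / 2 = 0 then (1 : ℝ) else -1)]
    norm_num
  · rw [S (fun b => (if b / 2 = 0 then (1 : ℝ) else -1) * (if b % 2 = 0 then (1 : ℝ) else -1))]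
    norm_num
  · intro i j
    have hi := hb i
    have hj := hb j
    rw [hM, Matrix.of_apply]
    generalize blk i = a at *
    generalize blk j = b at *
    interval_cases a <;> interval_cases b <;> norm_num
  · intro i j
    have hi := hb i
    have hj := hb j
    rw [hN, Matrix.of_apply, hW, hM, Matrix.of_apply, Matrix.of_apply]
    generalize blk i = a at *
    generalize blk j = b at *
    interval_cases a <;> interval_cases b <;> norm_num
end
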